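/- arXiv:1504.02425 — 4 statements merged into one kernel-verified Lean document; each statement's English description precedes it below -/
import Mathlib

section
/- Let α > 0 and β > 0. The sliding vector field Z̃_{α,β} vanishes at (0,0), is differentiable at (0,0), and its Jacobian matrix there equals [[0, −4α²/(3β²)], [1/2, α/(6β)]]. The complex eigenvalues of this matrix are α(1 + i√95)/(12β) and α(1 − i√95)/(12β); in particular both eigenvalues have positive real part and nonzero imaginary part, so the origin is a hyperbolic unstable focus of the sliding dynamics, i.e. a hyperbolic pseudo saddle–focus of Z_{α,β} lying in the sliding region Σˢ. -/
/-!
Each component of the field is a quotient `N / D` with `N (0, 0) = 0` and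
`D (0, 0) = 3β²/(4α) ≠ 0`, so its derivative at the origin is that of `N` divided by `D (0, 0)`
(`hasFDerivAt_div_of_eq_zero`); this yields the stated Jacobian. The Jacobian has trace `α/(6β)`
and determinant `2α²/(3β²)`, and with `c = α/(12β)` its characteristic polynomial is
`λ² - 2cλ + 96c²`, whose roots are `c(1 ± i√95)`.
-/

/-- At a zero of the numerator, the quotient rule loses the term with the derivative of the
denominator. -/
lemma hasFDerivAt_div_of_eq_zero {E : Type*} [NormedAddCommGroup E] [NormedSpace ℝ E]
    {N D : E → ℝ} {N' : E →L[ℝ] ℝ} {p : E} (hN : HasFDerivAt N N' p)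
    (hD : DifferentiableAt ℝ D p) (hN0 : N p = 0) (hD0 : D p ≠ 0) :
    HasFDerivAt (fun q => N q / D q) ((D p)⁻¹ • N') p := by
  have h := hN.mul (hD.inv hD0).hasFDerivAt
  simp only [hN0, zero_smul, zero_add] at h
  exact h

/-- The factor `1 + s i` with `s² = 95` gives a root of `λ² - 2cλ + 96c²`, where `c = α/(12β)`.
Taking `s = ±√95` covers both eigenvalues. -/
lemma det_sub_eigenvalue_eq_zero {α β : ℝ} (hβ : β ≠ 0) {s : ℂ} (hs : s ^ 2 = 95) :
    ((!![(0 : ℂ), ((-(4 * α ^ 2 / (3 * β ^ 2)) : ℝ) : ℂ);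
         ((1 / 2 : ℝ) : ℂ), ((α / (6 * β) : ℝ) : ℂ)] : Matrix (Fin 2) (Fin 2) ℂ)
      - (((α / (12 * β) : ℝ) : ℂ) * (1 + Complex.I * s)) •
        (1 : Matrix (Fin 2) (Fin 2) ℂ)).det = 0 := by
  have hβ' : (β : ℂ) ≠ 0 := by exact_mod_cast hβ
  have hI := Complex.I_sq
  rw [Matrix.det_fin_two]
  simp
  field_simp
  grind


/- STATEMENT 1: The sliding vector field Z̃_{α,β} of the piecewise linear Filippov
model vanishes at (0,0), is differentiable there with Jacobian
[[0, −4α²/(3β²)], [1/2, α/(6β)]], whose eigenvalues α(1 ± i√95)/(12β) are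
non-real with positive real part; moreover (0,0) lies in the sliding region
Σˢ = {y < 3β²/(8α)}, so the origin is a hyperbolic pseudo saddle–focus. -/
theorem origin_hyperbolic_pseudo_saddle_focus (α β : ℝ) (hα : 0 < α) (hβ : 0 < β)
    (Zt : ℝ × ℝ → ℝ × ℝ)
    (hZt : ∀ p : ℝ × ℝ, Zt p =
      ((-(α * p.2)) / (3 * β ^ 2 / (4 * α) - p.2),
       (3 * β ^ 2 * p.1 / (8 * α) + β * p.2 / 8 - 3 * α * p.2 ^ 2 / β)
         / (3 * β ^ 2 / (4 * α) - p.2))) :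
    Zt (0, 0) = (0, 0) ∧
    (∃ L : ℝ × ℝ →L[ℝ] ℝ × ℝ,
      HasFDerivAt Zt L (0, 0) ∧
      (∀ v : ℝ × ℝ,
        L v = ((-(4 * α ^ 2 / (3 * β ^ 2))) * v.2,
               (1 / 2) * v.1 + (α / (6 * β)) * v.2))) ∧
    (let M : Matrix (Fin 2) (Fin 2) ℂ :=
      !![(0 : ℂ), ((-(4 * α ^ 2 / (3 * β ^ 2)) : ℝ) : ℂ);
         ((1 / 2 : ℝ) : ℂ), ((α / (6 * β) : ℝ) : ℂ)]
     let lam : ℂ := ((α / (12 * β) : ℝ) : ℂ) * (1 + Complex.I * ((Real.sqrt 95 : ℝ) : ℂ))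
     (M - lam • (1 : Matrix (Fin 2) (Fin 2) ℂ)).det = 0 ∧
     (M - (starRingEnd ℂ) lam • (1 : Matrix (Fin 2) (Fin 2) ℂ)).det = 0 ∧
     0 < lam.re ∧ lam.im ≠ 0) ∧
    (0 : ℝ) < 3 * β ^ 2 / (8 * α) := by
  have hD : 3 * β ^ 2 / (4 * α) - (0 : ℝ) ≠ 0 := by
    rw [sub_zero]; positivity
  have h95 : ((Real.sqrt 95 : ℝ) : ℂ) ^ 2 = 95 := by
    norm_cast
    exact Real.sq_sqrt (by norm_num)
  refine ⟨by simp [hZt], ?_, ?_, by positivity⟩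
  · have h1 : HasFDerivAt (fun p : ℝ × ℝ => p.1) (ContinuousLinearMap.fst ℝ ℝ ℝ) (0, 0) :=
      hasFDerivAt_fst
    have h2 : HasFDerivAt (fun p : ℝ × ℝ => p.2) (ContinuousLinearMap.snd ℝ ℝ ℝ) (0, 0) :=
      hasFDerivAt_snd
    have hDd : DifferentiableAt ℝ (fun p : ℝ × ℝ => 3 * β ^ 2 / (4 * α) - p.2) (0, 0) := by
      fun_prop
    have hN1 : HasFDerivAt (fun p : ℝ × ℝ => -(α * p.2))
        (-(α • ContinuousLinearMap.snd ℝ ℝ ℝ)) (0, 0) := (h2.const_mul α).neg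
    have hN2 : HasFDerivAt
        (fun p : ℝ × ℝ => 3 * β ^ 2 * p.1 / (8 * α) + β * p.2 / 8 - 3 * α * p.2 ^ 2 / β)
        ((3 * β ^ 2 / (8 * α)) • ContinuousLinearMap.fst ℝ ℝ ℝ
          + (β / 8) • ContinuousLinearMap.snd ℝ ℝ ℝ) (0, 0) := by
      -- the quadratic term contributes `0`
      have h := ((h1.const_mul (3 * β ^ 2 / (8 * α))).add (h2.const_mul (β / 8))).sub
        ((h2.pow 2).const_mul (3 * α / β))
      refine (h.congr_fderiv (by simp)).congr_of_eventuallyEq (.of_forall fun p => ?_)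
      simp only [Pi.add_apply, Pi.sub_apply]
      ring
    have hZ := (hasFDerivAt_div_of_eq_zero hN1 hDd (by simp) hD).prodMk
      (hasFDerivAt_div_of_eq_zero hN2 hDd (by simp) hD)
    refine ⟨_, hZ.congr_of_eventuallyEq (.of_forall hZt), fun v => ?_⟩
    ext
    · simp
      field_simp
    · simp
      field_simp
      ring
  · intro M lam
    have hpos : 0 < α / (12 * β) := by positivity
    have hconj : (starRingEnd ℂ) lam
        = ((α / (12 * β) : ℝ) : ℂ) * (1 + Complex.I * (-((Real.sqrt 95 : ℝ) : ℂ))) := by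
      simp only [lam, map_mul, map_add, map_one, Complex.conj_ofReal, Complex.conj_I]
      ring
    refine ⟨det_sub_eigenvalue_eq_zero hβ.ne' h95, ?_, ?_, ?_⟩
    · rw [hconj]
      exact det_sub_eigenvalue_eq_zero hβ.ne' (by rw [neg_sq, h95])
    · have : lam.re = α / (12 * β) := by
        simp only [lam, Complex.re_ofReal_mul]
        simp
      rw [this]
      exact hpos
    · have : lam.im = α / (12 * β) * Real.sqrt 95 := by
        simp only [lam, Complex.im_ofReal_mul]
        simp
      rw [this]
      positivity
end

section
/- Let α > 0, β > 0 and q = (3β/2, 3β²/(8α), 0). The curve φ(t) = (3β/2 − α·t, (3β − 2α·t)(β + 2α·t)/(8α), (3β − 2α·t)·t²/12) solves the initial value problem φ'(t) = X_{α,β}(φ(t)), φ(0) = q, for all t ∈ ℝ; moreover its third component satisfies φ₃(t) > 0 for every t ∈ (0, 3β/(2α)) and φ(3β/(2α)) = (0,0,0). Hence the orbit of X_{α,β} starting at q reaches the origin in the finite time t⁺ = 3β/(2α), remaining in the open half-space z > 0 for intermediate times. -/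
/-! The vector field is triangular, so the differential equation is checked by differentiating
the polynomial components of `φ` one at a time. Every component of `φ` is a multiple of the linear
factor `3 * β - 2 * α * t`, which is positive before `t = 3 * β / (2 * α)` and vanishes there; this
gives both the positivity of the third component and the arrival at the origin. -/

/- STATEMENT 2: The explicit curve φ(t) = (3β/2 − αt, (3β − 2αt)(β + 2αt)/(8α),
(3β − 2αt)t²/12) solves φ' = X_{α,β}(φ), φ(0) = q = (3β/2, 3β²/(8α), 0); its third
component is positive on (0, 3β/(2α)) and φ(3β/(2α)) = (0,0,0): the orbit of
X_{α,β} through q reaches the origin in finite time t⁺ = 3β/(2α), staying in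
z > 0 in between. -/
theorem orbit_from_fold_reaches_origin (α β : ℝ) (hα : 0 < α) (hβ : 0 < β)
    (X : ℝ × ℝ × ℝ → ℝ × ℝ × ℝ)
    (hX : ∀ p : ℝ × ℝ × ℝ, X p = (-α, p.1 - β, p.2.1 - 3 * β ^ 2 / (8 * α)))
    (φ : ℝ → ℝ × ℝ × ℝ)
    (hφ : ∀ t : ℝ, φ t =
      (3 * β / 2 - α * t,
       (3 * β - 2 * α * t) * (β + 2 * α * t) / (8 * α),
       (3 * β - 2 * α * t) * t ^ 2 / 12)) :
    φ 0 = (3 * β / 2, 3 * β ^ 2 / (8 * α), 0) ∧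
    (∀ t : ℝ, HasDerivAt φ (X (φ t)) t) ∧
    (∀ t ∈ Set.Ioo (0 : ℝ) (3 * β / (2 * α)), 0 < (φ t).2.2) ∧
    φ (3 * β / (2 * α)) = (0, 0, 0) := by
  obtain rfl : φ = _ := funext hφ
  refine ⟨?_, fun t => ?_, ?_, ?_⟩
  · ext <;> simp <;> ring
  · rw [hX]
    have hα' : α ≠ 0 := hα.ne'
    have hid := hasDerivAt_id' t
    have hlin : HasDerivAt (fun t : ℝ => 3 * β - 2 * α * t) (-(2 * α * 1)) t :=
      (hid.const_mul (2 * α)).const_sub (3 * β)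
    refine HasDerivAt.prodMk ?_ (HasDerivAt.prodMk ?_ ?_)
    · simpa using (hid.const_mul α).const_sub (3 * β / 2)
    · refine ((hlin.mul ((hid.const_mul (2 * α)).const_add β)).div_const (8 * α)).congr_deriv ?_
      field_simp
      ring
    · refine ((hlin.mul (hasDerivAt_pow 2 t)).div_const 12).congr_deriv ?_
      field_simp
      ring
  · rintro t ⟨h0, h1⟩
    rw [lt_div_iff₀ (by positivity)] at h1
    have hpos : 0 < 3 * β - 2 * α * t := by linarith
    positivity
  ·
    -- The linear factor `3 * β - 2 * α * t`, common to the last two components and twice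
    -- the first one, vanishes at `t = 3 * β / (2 * α)`.
    have hzero : 3 * β - 2 * α * (3 * β / (2 * α)) = 0 := by
      field_simp
      ring
    ext
    · change 3 * β / 2 - α * (3 * β / (2 * α)) = 0
      linarith
    · simp only [hzero, zero_mul, zero_div]
    · simp only [hzero, zero_mul, zero_div]
end

section
/- Let α > 0 and β > 0. If g = (g₁, g₂) : ℝ → ℝ² is differentiable and solves g₁'(τ) = g₂(τ) and g₂'(τ) = −6·g₁(τ) − g₂(τ)/2 + (9/2)·g₂(τ)², then the function f(t) = ((3β/2)·g₁(−β·t/4), (3β²/(8α))·g₂(−β·t/4)) solves f'(t) = Ẑ_{α,β}(f(t)) for all t ∈ ℝ. That is, the change of variables (x,y) = ((3β/2)·u, (3β²/(8α))·v) together with the time rescaling t = −(4/β)·τ transforms the normalized sliding vector field Ẑ_{α,β} into the planar system Z̄(u,v) = (v, −6u − v/2 + (9/2)v²), reversing the direction of time. -/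
/- STATEMENT 3: The change of variables (x,y) = ((3β/2)u, (3β²/(8α))v) and the time
rescaling t = −(4/β)τ transform the normalized sliding vector field
Ẑ_{α,β}(x,y) = (−αy, 3β²x/(8α) + βy/8 − 3αy²/β) into the planar system
Z̄(u,v) = (v, −6u − v/2 + (9/2)v²), reversing time: if g solves g' = Z̄(g), then
f(t) = ((3β/2)g₁(−βt/4), (3β²/(8α))g₂(−βt/4)) solves f' = Ẑ_{α,β}(f). -/
theorem rescaling_of_normalized_sliding_field (α β : ℝ) (hα : 0 < α) (hβ : 0 < β)
    (g : ℝ → ℝ × ℝ)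
    (hg : ∀ τ : ℝ, HasDerivAt g
      ((g τ).2, -6 * (g τ).1 - (g τ).2 / 2 + (9 / 2) * (g τ).2 ^ 2) τ)
    (f : ℝ → ℝ × ℝ)
    (hf : ∀ t : ℝ, f t =
      ((3 * β / 2) * (g (-(β * t) / 4)).1,
       (3 * β ^ 2 / (8 * α)) * (g (-(β * t) / 4)).2)) :
    ∀ t : ℝ, HasDerivAt f
      (-(α * (f t).2),
       3 * β ^ 2 * (f t).1 / (8 * α) + β * (f t).2 / 8 - 3 * α * (f t).2 ^ 2 / β) t := by
  intro t
  have hτ : HasDerivAt (fun t : ℝ => -(β * t) / 4) (-(β * 1) / 4) t :=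
    (((hasDerivAt_id t).const_mul β).neg).div_const 4
  have hgτ := (hg (-(β * t) / 4)).scomp t hτ
  have h₁ := (hasFDerivAt_fst.comp_hasDerivAt t hgτ).const_mul (3 * β / 2)
  have h₂ := (hasFDerivAt_snd.comp_hasDerivAt t hgτ).const_mul (3 * β ^ 2 / (8 * α))
  -- The factor `-β / 4` from the chain rule turns the rescaled planar field into `Ẑ`.
  convert h₁.prodMk h₂ using 1
  · exact funext hf
  · rw [hf t]
    ext
    · simp
      field_simp
      ring
    · simp
      field_simp
      ring
end

section
/- There exists a continuously differentiable function g = (g₁, g₂) : [0, ∞) → ℝ² with g(0) = (1,1) and g'(t) = (g₂(t), −6·g₁(t) − g₂(t)/2 + (9/2)·g₂(t)²) for all t ≥ 0, such that g₂(t) < 1 for every t > 0 and g(t) → (0,0) as t → ∞. In other words, the forward orbit of the planar system Z̄(u,v) = (v, −6u − v/2 + (9/2)v²) starting at the point (1,1) is attracted to the equilibrium (0,0) without ever returning to the line v = 1. -/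
/-!
Dropping the damping term `-v/2` from `Z̄` leaves a system with the first integral
`H(u,v) = e^{-9u} (v² - 4u/3 - 4/27)`, and along `Z̄` itself `H' = -v² e^{-9u} ≤ 0`.
Since `H(1,1) = -(13/27) e^{-9} < 0`, the forward orbit of `(1,1)` stays in a sublevel set of `H`
which lies in the strip `-1/9 ≤ u ≤ 4/3` and in `|v| ≤ 2`. To get a solution defined for all times,
the field is multiplied by a smooth bump function equal to `1` on this region; the product is
bounded and Lipschitz, `H` still decreases along it, and so the cut-off is never felt for `t ≥ 0`.

The remaining claims follow from the strict Lyapunov function `W(u,v) = H(u,v) + (uv/4) e^{-9u}`,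
which satisfies `W' ≤ -e^{-9u} (u² + v²)/2` on the half plane `u ≥ -1/9`.

* On the line `v = 1` one has `v' = 4 - 6u`, so the line can only be reached from below at a point
  with `u ≤ 2/3`; but there `W > 0`, whereas `W ≤ W(1,1) < 0` along the orbit.
* `W + 4/27` is bounded above and below by multiples of `e^{-9u} (u² + v²)` on the region, hence
  decays exponentially and forces `(u,v) → (0,0)`.
-/

open Set Filter Topology

/-! ### Global solutions of bounded Lipschitz fields -/

/-- A bounded Lipschitz autonomous field has solutions on every symmetric interval: the
Picard–Lindelöf ball may be taken as large as the prescribed time requires. -/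
lemma exists_solution_Ioo {E : Type*} [NormedAddCommGroup E] [NormedSpace ℝ E] [CompleteSpace E]
    {F : E → E} {K C : NNReal} (hK : LipschitzWith K F) (hC : ∀ x, ‖F x‖ ≤ C) (x₀ : E)
    (T : NNReal) :
    ∃ f : ℝ → E, f 0 = x₀ ∧ ∀ t ∈ Ioo (-(T : ℝ)) T, HasDerivAt f (F (f t)) t := by
  have hP : IsPicardLindelof (fun _ ↦ F) (tmin := -(T : ℝ)) (tmax := T)
      ⟨0, by simp⟩ x₀ (C * T) 0 C K := by
    apply IsPicardLindelof.of_time_independent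
    · intro x _
      exact hC x
    · exact hK.lipschitzOnWith
    · simp
  obtain ⟨f, h0, hf⟩ := hP.exists_eq_forall_mem_Icc_hasDerivWithinAt₀
  refine ⟨f, h0, fun t ht ↦ ?_⟩
  exact (hf t (Ioo_subset_Icc_self ht)).hasDerivAt (Icc_mem_nhds ht.1 ht.2)

lemma exists_global_solution {E : Type*} [NormedAddCommGroup E] [NormedSpace ℝ E] [CompleteSpace E]
    {F : E → E} {K C : NNReal} (hK : LipschitzWith K F) (hC : ∀ x, ‖F x‖ ≤ C) (x₀ : E) :
    ∃ f : ℝ → E, f 0 = x₀ ∧ ∀ t, HasDerivAt f (F (f t)) t := by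
  choose f h0 hf using fun n : ℕ ↦ exists_solution_Ioo hK hC x₀ ((n : NNReal) + 1)
  push_cast at hf
  -- The solutions on nested intervals agree by uniqueness, so they can be glued.
  have heq : ∀ m n : ℕ, m ≤ n → ∀ t ∈ Ioo (-((m : ℝ) + 1)) (m + 1), f m t = f n t := by
    intro m n hmn
    have hmn' : (m : ℝ) ≤ n := by exact_mod_cast hmn
    have hm : (0 : ℝ) ≤ m := m.cast_nonneg
    refine ODE_solution_unique_of_mem_Ioo (v := fun _ ↦ F) (s := fun _ ↦ univ) (K := K) (t₀ := 0)
      (fun _ _ ↦ hK.lipschitzOnWith) ⟨by linarith, by linarith⟩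
      (fun t ht ↦ ⟨hf m t ht, mem_univ _⟩) (fun t ht ↦ ⟨hf n t ⟨?_, ?_⟩, mem_univ _⟩)
      (by rw [h0, h0])
    · linarith [ht.1]
    · linarith [ht.2]
  have hceil : ∀ t : ℝ, t ∈ Ioo (-((⌈|t|⌉₊ : ℝ) + 1)) (⌈|t|⌉₊ + 1) := by
    intro t
    have h1 := Nat.le_ceil |t|
    exact ⟨by linarith [neg_abs_le t], by linarith [le_abs_self t]⟩
  refine ⟨fun t ↦ f ⌈|t|⌉₊ t, h0 _, fun t ↦ ?_⟩
  refine (hf ⌈|t|⌉₊ t (hceil t)).congr_of_eventuallyEq ?_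
  filter_upwards [Ioo_mem_nhds (hceil t).1 (hceil t).2] with s hs
  rcases le_total ⌈|s|⌉₊ ⌈|t|⌉₊ with h | h
  · exact heq _ _ h s (hceil s)
  · exact (heq _ _ h s hs).symm

/-! ### The field and its cut-off -/

/-- The planar field `Z̄`. -/
noncomputable def fieldZ (p : ℝ × ℝ) : ℝ × ℝ :=
  (p.2, -6 * p.1 - p.2 / 2 + (9 / 2) * p.2 ^ 2)

/-- A global solution of the cut-off field `χ · Z̄`, where `0 ≤ χ` and `χ = 1` on the square
`[-2, 2]²` (the closed ball of radius `2` for the sup norm of `ℝ × ℝ`). -/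
lemma exists_cutoff_solution :
    ∃ (χ : ℝ × ℝ → ℝ) (g : ℝ → ℝ × ℝ), (∀ p, 0 ≤ χ p) ∧
      (∀ p : ℝ × ℝ, |p.1| ≤ 2 → |p.2| ≤ 2 → χ p = 1) ∧ g 0 = (1, 1) ∧
      ∀ t, HasDerivAt g (χ (g t) • fieldZ (g t)) t := by
  let b : ContDiffBump (0 : ℝ × ℝ) := ⟨2, 3, by norm_num, by norm_num⟩
  have hcs : HasCompactSupport (fun p ↦ b p • fieldZ p) := b.hasCompactSupport.smul_right
  have hcd : ContDiff ℝ 1 (fun p ↦ b p • fieldZ p) := by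
    refine b.contDiff.smul ?_
    unfold fieldZ
    fun_prop
  obtain ⟨K, hK⟩ := ContDiff.lipschitzWith_of_hasCompactSupport hcs hcd one_ne_zero
  obtain ⟨C, hC⟩ := hcs.exists_bound_of_continuous hcd.continuous
  obtain ⟨g, h0, hg⟩ := exists_global_solution hK (C := C.toNNReal)
    (fun x ↦ (hC x).trans (Real.le_coe_toNNReal C)) (1, 1)
  refine ⟨b, g, fun p ↦ b.nonneg, fun p h1 h2 ↦ ?_, h0, hg⟩
  apply b.one_of_mem_closedBall
  simp only [mem_closedBall_zero_iff, Prod.norm_def, Real.norm_eq_abs, sup_le_iff]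
  exact ⟨h1, h2⟩

/-! ### The first integral of the undamped system -/

/-- The first integral `e^{-9u} (v² - 4u/3 - 4/27)` of the undamped system. -/
noncomputable def energy (u v : ℝ) : ℝ :=
  Real.exp (-9 * u) * (v ^ 2 - 4 / 3 * u - 4 / 27)

lemma hasDerivAt_exp_neg_nine {u : ℝ → ℝ} {u' t : ℝ} (hu : HasDerivAt u u' t) :
    HasDerivAt (fun s ↦ Real.exp (-9 * u s)) (Real.exp (-9 * u t) * (-9 * u')) t :=
  (hu.const_mul (-9)).exp

lemma hasDerivAt_energy {u v : ℝ → ℝ} {u' v' t : ℝ} (hu : HasDerivAt u u' t)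
    (hv : HasDerivAt v v' t) :
    HasDerivAt (fun s ↦ energy (u s) (v s))
      (Real.exp (-9 * u t) * (2 * v t * v' + 12 * u t * u' - 9 * v t ^ 2 * u')) t := by
  have h := (hasDerivAt_exp_neg_nine hu).mul
    (((hv.pow 2).sub (hu.const_mul (4 / 3))).sub_const (4 / 27))
  refine h.congr_deriv ?_
  simp only [Pi.sub_apply, Pi.pow_apply]
  push_cast
  ring

/-- The sublevel set of the energy through `(1,1)` is bounded. -/
lemma bounds_of_energy_le {u v : ℝ} (h : energy u v ≤ energy 1 1) :
    -1 / 9 ≤ u ∧ u ≤ 4 / 3 ∧ |v| ≤ 2 := by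
  have hE := Real.exp_pos (9 * u)
  -- multiplying by `e^{9u}` and writing `e^{9u} e^{-9} = e^{9(u-1)}`
  have key : v ^ 2 + 13 / 27 * Real.exp (9 * (u - 1)) ≤ 4 / 3 * u + 4 / 27 := by
    have h1 := mul_le_mul_of_nonneg_left h hE.le
    unfold energy at h1
    rw [← mul_assoc, ← mul_assoc, ← Real.exp_add, ← Real.exp_add] at h1
    rw [show 9 * u + -9 * u = 0 by ring, Real.exp_zero,
      show 9 * u + -9 * 1 = 9 * (u - 1) by ring] at h1
    linarith
  have hpos := Real.exp_pos (9 * (u - 1))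
  have hlin := Real.add_one_le_exp (9 * (u - 1))
  have hu : u ≤ 4 / 3 := by nlinarith [sq_nonneg v]
  refine ⟨by nlinarith [sq_nonneg v], hu, ?_⟩
  exact abs_le_of_sq_le_sq (by nlinarith) (by norm_num)

/-- An orbit of `Z̄` from `(1,1)`, together with the a priori bounds given by the energy. -/
lemma exists_bounded_orbit :
    ∃ g : ℝ → ℝ × ℝ, g 0 = (1, 1) ∧ (∀ t, 0 ≤ t → HasDerivAt g (fieldZ (g t)) t) ∧
      ∀ t, 0 ≤ t → -1 / 9 ≤ (g t).1 ∧ (g t).1 ≤ 4 / 3 := by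
  obtain ⟨χ, g, hχ0, hχ1, h0, hg⟩ := exists_cutoff_solution
  have hE : ∀ t, HasDerivAt (fun s ↦ energy (g s).1 (g s).2)
      (-(χ (g t) * (Real.exp (-9 * (g t).1) * (g t).2 ^ 2))) t := by
    intro t
    refine (hasDerivAt_energy (hg t).fst (hg t).snd).congr_deriv ?_
    simp only [fieldZ, Prod.smul_fst, Prod.smul_snd, smul_eq_mul]
    ring
  have hanti : Antitone (fun s ↦ energy (g s).1 (g s).2) := by
    refine antitone_of_deriv_nonpos (fun t ↦ (hE t).differentiableAt) (fun t ↦ ?_)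
    rw [(hE t).deriv]
    have := hχ0 (g t)
    have := Real.exp_pos (-9 * (g t).1)
    have : 0 ≤ χ (g t) * (Real.exp (-9 * (g t).1) * (g t).2 ^ 2) := by positivity
    linarith
  have hb : ∀ t, 0 ≤ t → -1 / 9 ≤ (g t).1 ∧ (g t).1 ≤ 4 / 3 ∧ |(g t).2| ≤ 2 := by
    intro t ht
    apply bounds_of_energy_le
    simpa [h0] using hanti ht
  refine ⟨g, h0, fun t ht ↦ ?_, fun t ht ↦ ⟨(hb t ht).1, (hb t ht).2.1⟩⟩
  obtain ⟨h1, h2, h3⟩ := hb t ht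
  have := hg t
  rwa [hχ1 _ (abs_le.2 ⟨by linarith, by linarith⟩) h3, one_smul] at this

/-! ### The strict Lyapunov function -/

/-- The strict Lyapunov function: the energy plus the cross term `(uv/4) e^{-9u}`. -/
noncomputable def lyap (u v : ℝ) : ℝ :=
  energy u v + Real.exp (-9 * u) * (u * v / 4)

lemma hasDerivAt_lyap {g : ℝ → ℝ × ℝ} {t : ℝ} (hg : HasDerivAt g (fieldZ (g t)) t) :
    HasDerivAt (fun s ↦ lyap (g s).1 (g s).2)
      (-(Real.exp (-9 * (g t).1) * ((g t).2 ^ 2 * (3 / 4 + 9 / 8 * (g t).1)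
        + 3 / 2 * (g t).1 ^ 2 + (g t).1 * (g t).2 / 8))) t := by
  have hu : HasDerivAt (fun s ↦ (g s).1) (fieldZ (g t)).1 t := hg.fst
  have hv : HasDerivAt (fun s ↦ (g s).2) (fieldZ (g t)).2 t := hg.snd
  have h := (hasDerivAt_energy hu hv).add
    ((hasDerivAt_exp_neg_nine hu).mul ((hu.mul hv).div_const 4))
  refine h.congr_deriv ?_
  simp only [fieldZ, Pi.mul_apply]
  ring

lemma lyap_deriv_le {u v : ℝ} (hu : -1 / 9 ≤ u) :
    -(Real.exp (-9 * u) * (v ^ 2 * (3 / 4 + 9 / 8 * u) + 3 / 2 * u ^ 2 + u * v / 8))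
      ≤ -(Real.exp (-9 * u) * (u ^ 2 + v ^ 2) / 2) := by
  have hE := Real.exp_pos (-9 * u)
  have h : (u ^ 2 + v ^ 2) / 2 ≤ v ^ 2 * (3 / 4 + 9 / 8 * u) + 3 / 2 * u ^ 2 + u * v / 8 := by
    nlinarith [mul_nonneg (sq_nonneg v) (by linarith : 0 ≤ u + 1 / 9), sq_nonneg (u + v),
      sq_nonneg u, sq_nonneg v]
  have := mul_le_mul_of_nonneg_left h hE.le
  linarith

lemma quarter_sq_le_exp {x : ℝ} (hx : -1 ≤ x) : 1 + x + x ^ 2 / 4 ≤ Real.exp x := by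
  rcases le_total 0 x with h | h
  · nlinarith [Real.quadratic_le_exp_of_nonneg h, sq_nonneg x]
  · have hb := Real.exp_bound (x := x) (by rw [abs_le]; constructor <;> linarith)
      (n := 3) (by norm_num)
    rw [abs_of_nonpos h] at hb
    norm_num [Finset.sum_range_succ, Nat.factorial] at hb
    have h2 := (abs_le.1 hb).1
    nlinarith [mul_nonneg (sq_nonneg x) (by linarith : 0 ≤ 1 + x)]

lemma le_lyap {u v : ℝ} (hu : -1 / 9 ≤ u) :
    Real.exp (-9 * u) * (u ^ 2 + v ^ 2) / 2 ≤ lyap u v + 4 / 27 := by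
  have hE := Real.exp_pos (-9 * u)
  have h1 := quarter_sq_le_exp (x := 9 * u) (by linarith)
  have hone : Real.exp (-9 * u) * Real.exp (9 * u) = 1 := by
    rw [← Real.exp_add]; simp
  have h2 := mul_le_mul_of_nonneg_left h1 hE.le
  rw [hone] at h2
  have h3 : (u ^ 2 + v ^ 2) / 2 ≤ v ^ 2 + 3 * u ^ 2 + u * v / 4 := by
    nlinarith [sq_nonneg (u + v), sq_nonneg u, sq_nonneg v]
  have h4 := mul_le_mul_of_nonneg_left h3 hE.le
  unfold lyap energy
  nlinarith

lemma lyap_le {u v : ℝ} (hu : -1 / 9 ≤ u) (hu' : u ≤ 4 / 3) :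
    lyap u v + 4 / 27 ≤
      (2 + 12 * Real.exp 12) * (Real.exp (-9 * u) * (u ^ 2 + v ^ 2)) := by
  have hE := Real.exp_pos (-9 * u)
  -- `(1 + x) e^{-x} ≥ (1 + x) (1 - x)` with `x = 9u`
  have h1 : (1 + 9 * u) * (1 - 9 * u) ≤ (1 + 9 * u) * Real.exp (-9 * u) :=
    mul_le_mul_of_nonneg_left (by linarith [Real.add_one_le_exp (-9 * u)]) (by linarith)
  have h2 : 1 ≤ Real.exp 12 * Real.exp (-9 * u) := by
    rw [← Real.exp_add]
    exact Real.one_le_exp (by linarith)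
  have h3 : u ^ 2 ≤ Real.exp 12 * Real.exp (-9 * u) * u ^ 2 :=
    le_mul_of_one_le_left (sq_nonneg u) h2
  have h4 : 0 ≤ Real.exp 12 * Real.exp (-9 * u) * v ^ 2 := by positivity
  have h5 : v ^ 2 + u * v / 4 ≤ 2 * (u ^ 2 + v ^ 2) := by
    nlinarith [sq_nonneg (u - v), sq_nonneg u, sq_nonneg v]
  have h6 := mul_le_mul_of_nonneg_left h5 hE.le
  unfold lyap energy
  nlinarith

/-- Points of the line `v = 1` where the Lyapunov function is below its value at `(1,1)` lie in the
part of the line that the flow crosses downwards. -/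
lemma two_thirds_lt_of_lyap_le {u : ℝ} (h : lyap u 1 ≤ lyap 1 1) : 2 / 3 < u := by
  by_contra hu
  push Not at hu
  have h1 : 0 < lyap u 1 := by
    have : lyap u 1 = Real.exp (-9 * u) * (23 / 27 - 13 / 12 * u) := by
      unfold lyap energy; ring
    rw [this]
    exact mul_pos (Real.exp_pos _) (by linarith)
  have h2 : lyap 1 1 < 0 := by
    have : lyap 1 1 = -(Real.exp (-9) * (25 / 108)) := by
      unfold lyap energy; rw [mul_one]; ring
    rw [this]
    linarith [Real.exp_pos (-9)]
  linarith

/-! ### Behaviour of the orbit -/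

/-- Exponential decay of `lyap + 4/27` along the orbit, by Grönwall's argument. -/
lemma tendsto_zero_of_orbit {g : ℝ → ℝ × ℝ} (hg : ∀ t, 0 ≤ t → HasDerivAt g (fieldZ (g t)) t)
    (hb : ∀ t, 0 ≤ t → -1 / 9 ≤ (g t).1 ∧ (g t).1 ≤ 4 / 3) :
    Tendsto g atTop (𝓝 (0, 0)) := by
  set C : ℝ := 2 + 12 * Real.exp 12 with hCdef
  have hC : 0 < C := by positivity
  set k : ℝ := 1 / (2 * C) with hk
  have hkpos : 0 < k := by positivity
  set L : ℝ → ℝ := fun t ↦ lyap (g t).1 (g t).2 + 4 / 27 with hL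
  have hder : ∀ t, 0 ≤ t → ∃ d, HasDerivAt L d t ∧ d ≤ -(k * L t) := by
    intro t ht
    refine ⟨_, (hasDerivAt_lyap (hg t ht)).add_const (4 / 27), ?_⟩
    refine (lyap_deriv_le (hb t ht).1).trans ?_
    have h1 := lyap_le (v := (g t).2) (hb t ht).1 (hb t ht).2
    have h2 := mul_le_mul_of_nonneg_left h1 hkpos.le
    have h3 : k * (C * (Real.exp (-9 * (g t).1) * ((g t).1 ^ 2 + (g t).2 ^ 2)))
        = Real.exp (-9 * (g t).1) * ((g t).1 ^ 2 + (g t).2 ^ 2) / 2 := by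
      rw [hk]; field_simp
    have h4 : k * L t ≤ _ := h2.trans_eq h3
    linarith
  choose! d hd hdle using hder
  have hM : ∀ t, 0 ≤ t → HasDerivAt (fun s ↦ L s * Real.exp (k * s))
      ((d t + k * L t) * Real.exp (k * t)) t := by
    intro t ht
    have hexp : HasDerivAt (fun s ↦ Real.exp (k * s)) (Real.exp (k * t) * (k * 1)) t :=
      ((hasDerivAt_id t).const_mul k).exp
    refine ((hd t ht).mul hexp).congr_deriv ?_
    ring
  have hanti : AntitoneOn (fun s ↦ L s * Real.exp (k * s)) (Ici 0) := by
    refine antitoneOn_of_deriv_nonpos (convex_Ici 0)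
      (fun t ht ↦ (hM t ht).continuousAt.continuousWithinAt) ?_ ?_
    · intro t ht
      rw [interior_Ici] at ht
      exact (hM t (le_of_lt ht)).differentiableAt.differentiableWithinAt
    · intro t ht
      rw [interior_Ici] at ht
      rw [(hM t (le_of_lt ht)).deriv]
      exact mul_nonpos_of_nonpos_of_nonneg (by linarith [hdle t (le_of_lt ht)])
        (Real.exp_pos _).le
  have hdecay : ∀ t, 0 ≤ t →
      (g t).1 ^ 2 + (g t).2 ^ 2 ≤ 2 * Real.exp 12 * L 0 * Real.exp (-(k * t)) := by
    intro t ht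
    have h1 : L t * Real.exp (k * t) ≤ L 0 := by
      simpa using hanti (self_mem_Ici (a := (0 : ℝ))) ht ht
    have h2 : L t ≤ L 0 * Real.exp (-(k * t)) := by
      rw [Real.exp_neg, ← div_eq_mul_inv, le_div_iff₀ (Real.exp_pos _)]
      exact h1
    have h3 : _ ≤ L t := le_lyap (v := (g t).2) (hb t ht).1
    have h4 : 1 ≤ Real.exp 12 * Real.exp (-9 * (g t).1) := by
      rw [← Real.exp_add]
      exact Real.one_le_exp (by linarith [(hb t ht).2])
    calc (g t).1 ^ 2 + (g t).2 ^ 2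
        ≤ Real.exp 12 * Real.exp (-9 * (g t).1) * ((g t).1 ^ 2 + (g t).2 ^ 2) :=
          le_mul_of_one_le_left (by positivity) h4
      _ = 2 * Real.exp 12 * (Real.exp (-9 * (g t).1) * ((g t).1 ^ 2 + (g t).2 ^ 2) / 2) := by ring
      _ ≤ 2 * Real.exp 12 * (L 0 * Real.exp (-(k * t))) :=
          mul_le_mul_of_nonneg_left (h3.trans h2) (by positivity)
      _ = _ := by ring
  have hlim : Tendsto (fun t ↦ 2 * Real.exp 12 * L 0 * Real.exp (-(k * t))) atTop (𝓝 0) := by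
    have h1 : Tendsto (fun t : ℝ ↦ Real.exp (-(k * t))) atTop (𝓝 0) :=
      Real.tendsto_exp_neg_atTop_nhds_zero.comp (tendsto_id.const_mul_atTop hkpos)
    simpa using h1.const_mul (2 * Real.exp 12 * L 0)
  have hcoord : ∀ w : ℝ → ℝ, (∀ t, w t ^ 2 ≤ (g t).1 ^ 2 + (g t).2 ^ 2) →
      Tendsto w atTop (𝓝 0) := by
    intro w hw
    have hsq : Tendsto (fun t ↦ w t ^ 2) atTop (𝓝 0) := by
      refine squeeze_zero' (Eventually.of_forall fun t ↦ sq_nonneg _) ?_ hlim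
      filter_upwards [eventually_ge_atTop 0] with t ht
      exact (hw t).trans (hdecay t ht)
    have habs : Tendsto (fun t ↦ |w t|) atTop (𝓝 0) := by
      simpa [Real.sqrt_sq_eq_abs] using hsq.sqrt
    exact (tendsto_zero_iff_abs_tendsto_zero _).2 habs
  exact (hcoord (fun t ↦ (g t).1) fun t ↦ by nlinarith [sq_nonneg (g t).2]).prodMk_nhds
    (hcoord (fun t ↦ (g t).2) fun t ↦ by nlinarith [sq_nonneg (g t).1])

lemma snd_lt_one_of_orbit {g : ℝ → ℝ × ℝ} (h0 : g 0 = (1, 1))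
    (hg : ∀ t, 0 ≤ t → HasDerivAt g (fieldZ (g t)) t)
    (hb : ∀ t, 0 ≤ t → -1 / 9 ≤ (g t).1) {t : ℝ} (ht : 0 < t) : (g t).2 < 1 := by
  have hanti : AntitoneOn (fun s ↦ lyap (g s).1 (g s).2) (Ici 0) := by
    refine antitoneOn_of_deriv_nonpos (convex_Ici 0)
      (fun s hs ↦ (hasDerivAt_lyap (hg s hs)).continuousAt.continuousWithinAt) ?_ ?_
    · intro s hs
      rw [interior_Ici] at hs
      exact (hasDerivAt_lyap (hg s (le_of_lt hs))).differentiableAt.differentiableWithinAt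
    · intro s hs
      rw [interior_Ici] at hs
      rw [(hasDerivAt_lyap (hg s (le_of_lt hs))).deriv]
      refine (lyap_deriv_le (hb s (le_of_lt hs))).trans ?_
      have : 0 ≤ Real.exp (-9 * (g s).1) * ((g s).1 ^ 2 + (g s).2 ^ 2) / 2 := by positivity
      linarith
  have hneg : ∀ s, 0 ≤ s → (g s).2 = 1 → (fieldZ (g s)).2 < 0 := by
    intro s hs h1
    have h2 : lyap (g s).1 (g s).2 ≤ lyap 1 1 := by
      simpa [h0] using hanti (self_mem_Ici (a := (0 : ℝ))) hs hs
    rw [h1] at h2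
    have := two_thirds_lt_of_lyap_le h2
    simp only [fieldZ, h1]
    linarith
  have hsnd : ∀ s, 0 ≤ s → HasDerivAt (fun r ↦ (g r).2) (fieldZ (g s)).2 s :=
    fun s hs ↦ (hg s hs).snd
  have hle : ∀ s, 0 ≤ s → (g s).2 ≤ 1 := by
    intro s hs
    refine image_le_of_deriv_right_lt_deriv_boundary (f := fun r ↦ (g r).2)
      (f' := fun r ↦ (fieldZ (g r)).2) (a := 0) (b := s) (B := fun _ ↦ 1) (B' := fun _ ↦ 0)
      (fun r hr ↦ (hsnd r hr.1).continuousAt.continuousWithinAt)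
      (fun r hr ↦ (hsnd r hr.1).hasDerivWithinAt) (by simp [h0])
      (fun r ↦ hasDerivAt_const r 1) (fun r hr h ↦ hneg r hr.1 h) ⟨hs, le_rfl⟩
  refine lt_of_le_of_ne (hle t ht.le) fun h1 ↦ ?_
  -- A contact with the line at a positive time would be a local maximum of `v`.
  have hmax : IsLocalMax (fun r ↦ (g r).2) t := by
    filter_upwards [Ioi_mem_nhds ht] with r hr
    rw [h1]
    exact hle r (le_of_lt hr)
  exact (hneg t ht.le h1).ne (hmax.hasDerivAt_eq_zero (hsnd t ht.le))

/- STATEMENT 4: The forward orbit of the planar system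
Z̄(u,v) = (v, −6u − v/2 + (9/2)v²) starting at (1,1) is attracted to the
equilibrium (0,0) without ever returning to the line v = 1: there is a C¹
solution g on [0,∞) with g(0) = (1,1), g₂(t) < 1 for t > 0, and g(t) → (0,0)
as t → ∞. -/
theorem orbit_from_fold_attracted_to_focus :
    ∃ g : ℝ → ℝ × ℝ,
      g 0 = (1, 1) ∧
      (∀ t : ℝ, 0 ≤ t → HasDerivAt g
        ((g t).2, -6 * (g t).1 - (g t).2 / 2 + (9 / 2) * (g t).2 ^ 2) t) ∧
      (∀ t : ℝ, 0 < t → (g t).2 < 1) ∧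
      Filter.Tendsto g Filter.atTop (nhds (0, 0)) := by
  obtain ⟨g, h0, hg, hb⟩ := exists_bounded_orbit
  exact ⟨g, h0, hg, fun t ht ↦ snd_lt_one_of_orbit h0 hg (fun s hs ↦ (hb s hs).1) ht,
    tendsto_zero_of_orbit hg hb⟩
end
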